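/- For every integer n ≥ 2, the number of isomorphism classes of simple supernova graphs with n vertices (supernova graphs all of whose edge multiplicities are at most 1) equals ψ(2,n) + 1 − θ(n−2), where θ(k) = Σ_{i=0}^{k} p(i). -/

import Mathlib

/-!
An untwisted fission tree `T` of slope two is a surjection `I ↠ J` with multiplicities `μ` on `I`.
It defines a simple supernova graph: the complete multipartite graph on `I` with parts the fibres,
with a leg of length `μ i - 1` attached to `i`. This graph has `Σ μ = n` vertices. Conversely an
exact slope `k` fission graph has an edge of multiplicity at least `k - 1`, so every simple
supernova graph has `k = 2` and arises in this way. Both sides of the claim are therefore about the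
combinatorial types of trees (`blocks`): the multiset, over the branches `j : J`, of the multisets
of multiplicities of the leaves on `j`. There are `ψ(2,n)` of them (`psi_eq_ncard`), and it remains
to see how many types give the same graph.

If every core vertex has two core neighbours (`IsThick`), the graph determines the type: a vertex
set in which every vertex has two neighbours inside the set avoids the legs (`subset_core`), so
isomorphisms preserve the core. Otherwise the core is a star (`thick_or_star`), and the leg of its
centre, of length `c`, may just as well be regarded as an additional arm of the star
(`star_move`): `{{c + 1}, L}` and `{{1}, c ::ₘ L}` have the same graph. Types `Redundant` are those
of the first kind, together with, when the graph is a path, all types except `{{1}, {n - 1}}`. Every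
simple supernova graph has a type that is not redundant (`exists_nonredundant`), and only one
(`blocks_eq_of_iso`): in the star case the centre is recovered as the only vertex with at least three
neighbours, or the graph is a path.

Finally the redundant types correspond to the partitions `L` of the numbers `1, …, n - 2`, with
`c = n - 1 - ∑ L` (`card_redundant`). Hence there are `θ(n - 2) - 1` of them.
-/

/-- A fission chain of slope `≤ k` with `n` leaves: a chain of surjective maps of
finite sets `J₁ ↠ J₂ ↠ ⋯ ↠ J_{k+1}` with `|J₁| = n` and `|J_{k+1}| = 1`.
We encode `J_{i+1} := Fin (size i)`; the chain is prolonged trivially above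
height `k+1` (all later sets necessarily also have one element, since all the
maps are surjective). -/
structure FChain (k n : ℕ) where
  size : ℕ → ℕ
  map : ∀ i, Fin (size i) → Fin (size (i+1))
  surj : ∀ i, Function.Surjective (map i)
  size_zero : size 0 = n
  size_top : size k = 1

/-- A fission chain of slope `≤ k` has slope exactly `k` if `k = 0` or `|J_k| ≥ 2`
(here `J_k = Fin (size (k-1))`). -/
def FChain.ExactSlope {k n : ℕ} (c : FChain k n) : Prop :=
  k = 0 ∨ 2 ≤ c.size (k - 1)

/-- Isomorphism of fission chains: bijections between the corresponding sets
commuting with all the maps. -/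
def FChain.Iso {k n m : ℕ} (c : FChain k n) (d : FChain k m) : Prop :=
  ∃ e : ∀ i, Fin (c.size i) ≃ Fin (d.size i),
    ∀ i x, e (i+1) (c.map i x) = d.map i (e i x)

/-- `Φ(k,n)`: the number of isomorphism classes of fission chains of slope `≤ k`
with `n` leaves. -/
noncomputable def PhiBig (k n : ℕ) : ℕ :=
  Nat.card (Quot (fun c d : FChain k n => c.Iso d))

/-- `φ(k,n)`: the number of isomorphism classes of fission chains of slope
exactly `k` with `n` leaves. -/
noncomputable def phi (k n : ℕ) : ℕ :=
  Nat.card (Quot (fun c d : {c : FChain k n // c.ExactSlope} => c.1.Iso d.1))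

/-- An untwisted fission tree of slope `k` and rank `n`: a fission chain of slope
exactly `k` together with a multiplicity map `μ : J₁ → ℤ_{≥1}` with `Σ μ = n`. -/
structure FTree (k n : ℕ) where
  leaves : ℕ
  chain : FChain k leaves
  exact : chain.ExactSlope
  mult : Fin (chain.size 0) → ℕ
  mult_pos : ∀ i, 1 ≤ mult i
  mult_sum : ∑ i, mult i = n

/-- Isomorphism of untwisted fission trees: an isomorphism of the underlying
chains intertwining the multiplicity maps. -/
def FTree.Iso {k n : ℕ} (T U : FTree k n) : Prop :=
  ∃ e : ∀ i, Fin (T.chain.size i) ≃ Fin (U.chain.size i),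
    (∀ i x, e (i+1) (T.chain.map i x) = U.chain.map i (e i x)) ∧
    (∀ x, U.mult (e 0 x) = T.mult x)

/-- `ψ(k,n)`: the number of isomorphism classes of untwisted fission trees of
slope `k` and rank `n`. -/
noncomputable def psi (k n : ℕ) : ℕ :=
  Nat.card (Quot (fun T U : FTree k n => T.Iso U))

/-- A multigraph: a finite vertex set together with a symmetric edge-multiplicity
function vanishing on the diagonal. -/
structure MG where
  V : Type
  [fin : Fintype V]
  e : V → V → ℕ
  symm : ∀ i j, e i j = e j i
  loopless : ∀ i, e i i = 0

attribute [instance] MG.fin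

/-- Isomorphism of multigraphs. -/
def MG.Iso (G H : MG) : Prop :=
  ∃ σ : G.V ≃ H.V, ∀ i j, H.e (σ i) (σ j) = G.e i j

/-- The maximal edge multiplicity of `G` is exactly `k`. -/
def MG.MaxMultExact (G : MG) (k : ℕ) : Prop :=
  (∃ i j, G.e i j = k) ∧ ∀ i j, G.e i j ≤ k

/-- The image of a leaf at height `h+1` (the composite of the first `h` maps). -/
def FChain.img {k n : ℕ} (c : FChain k n) : ∀ h, Fin (c.size 0) → Fin (c.size h)
  | 0 => id
  | h+1 => c.map h ∘ c.img h

theorem FChain.meet_ex {k n : ℕ} (c : FChain k n) (i j : Fin (c.size 0)) :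
    ∃ h, c.img h i = c.img h j := by
  refine ⟨k, ?_⟩
  have h1 := c.size_top
  have hx : ∀ x : Fin (c.size k), x = ⟨0, by omega⟩ := fun x => by
    have := x.isLt; exact Fin.ext (by omega)
  rw [hx (c.img k i), hx (c.img k j)]

/-- `c.meet i j + 1` is the height of the nearest common ancestor of the leaves
`i` and `j`: `c.meet i j` is the least index `h` such that `i` and `j` have the
same image in `J_{h+1} = Fin (c.size h)`. -/
def FChain.meet {k n : ℕ} (c : FChain k n) (i j : Fin (c.size 0)) : ℕ :=
  Nat.find (c.meet_ex i j)

theorem FChain.meet_comm {k n : ℕ} (c : FChain k n) (i j : Fin (c.size 0)) :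
    c.meet i j = c.meet j i := by
  unfold FChain.meet
  exact le_antisymm (Nat.find_le (Nat.find_spec (c.meet_ex j i)).symm)
    (Nat.find_le (Nat.find_spec (c.meet_ex i j)).symm)

/-- The fission graph of a fission chain: vertices are the leaves, and the number
of edges between distinct leaves `i, j` is `h_{ij} - 2` where `h_{ij}` is the
height of their nearest common ancestor (here `h_{ij} = c.meet i j + 1`). -/
def FChain.graph {k n : ℕ} (c : FChain k n) : MG where
  V := Fin (c.size 0)
  e i j := if i = j then 0 else c.meet i j - 1
  symm i j := by
    by_cases h : i = j
    · subst h; rfl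
    · show (if i = j then 0 else c.meet i j - 1) = (if j = i then 0 else c.meet j i - 1)
      rw [if_neg h, if_neg (Ne.symm h), c.meet_comm]
  loopless i := by simp

/-- A multigraph is a fission graph if it is isomorphic to the fission graph of
some fission chain of slope exactly `k ≥ 2`. -/
def IsFissionGraph (G : MG) : Prop :=
  ∃ (k m : ℕ) (c : FChain k m), 2 ≤ k ∧ c.ExactSlope ∧ G.Iso c.graph

/-- The edge multiplicities of a supernova graph: the core edges of `G`, plus
single edges forming, for each vertex `i` of `G`, a simple path on `l i` new
vertices attached to `i`. -/
noncomputable def snovaE (G : MG) (l : G.V → ℕ) :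
    (G.V ⊕ Σ i : G.V, Fin (l i)) → (G.V ⊕ Σ i : G.V, Fin (l i)) → ℕ := by
  haveI : DecidableEq G.V := Classical.decEq G.V
  exact fun x y => match x, y with
    | .inl i, .inl j => G.e i j
    | .inl i, .inr ⟨j, t⟩ => if i = j ∧ t.val = 0 then 1 else 0
    | .inr ⟨j, t⟩, .inl i => if i = j ∧ t.val = 0 then 1 else 0
    | .inr ⟨i, s⟩, .inr ⟨j, t⟩ =>
        if i = j ∧ (s.val + 1 = t.val ∨ t.val + 1 = s.val) then 1 else 0

/-- The supernova graph obtained from a multigraph `G` by attaching to each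
vertex `i` a leg consisting of `l i` new vertices forming a simple path joined
to `i` by single edges. -/
noncomputable def MG.snova (G : MG) (l : G.V → ℕ) : MG where
  V := G.V ⊕ Σ i : G.V, Fin (l i)
  e := snovaE G l
  symm := by
    letI : DecidableEq G.V := Classical.decEq G.V
    unfold snovaE
    rintro (i | ⟨i, s⟩) (j | ⟨j, t⟩)
    · exact G.symm i j
    · rfl
    · rfl
    · show (if i = j ∧ (s.val + 1 = t.val ∨ t.val + 1 = s.val) then 1 else 0) =
          (if j = i ∧ (t.val + 1 = s.val ∨ s.val + 1 = t.val) then 1 else 0)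
      split_ifs with h1 h2 <;>
        first
          | rfl
          | exact absurd ⟨h1.1.symm, h1.2.symm⟩ h2
          | rename_i h2; exact absurd ⟨h2.1.symm, h2.2.symm⟩ h1
  loopless := by
    letI : DecidableEq G.V := Classical.decEq G.V
    unfold snovaE
    rintro (i | ⟨i, s⟩)
    · exact G.loopless i
    · simp

/-- A multigraph is a supernova graph if it is isomorphic to a graph obtained
from a fission graph by attaching legs. -/
def IsSupernova (G : MG) : Prop :=
  ∃ (H : MG) (l : H.V → ℕ), IsFissionGraph H ∧ G.Iso (H.snova l)

/-! ### Presentations by a surjection and a multiplicity function -/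

section Presentations

/-- Two families with the same multiset of values differ by a bijection of the index types. -/
theorem exists_equiv_of_map_eq {A B X : Type*} [Fintype A] [Fintype B] (a : A → X) (b : B → X)
    (h : (Finset.univ : Finset A).val.map a = (Finset.univ : Finset B).val.map b) :
    ∃ e : A ≃ B, ∀ i, b (e i) = a i := by
  classical
  have key : ∀ x : X, Nonempty ({i // a i = x} ≃ {i // b i = x}) := by
    intro x
    refine Fintype.card_eq.1 ?_
    have h2 := congrArg (Multiset.count x) h
    rw [Multiset.count_map, Multiset.count_map] at h2
    rw [Fintype.card_subtype, Fintype.card_subtype]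
    simpa [Finset.card_def, Finset.filter_val, eq_comm] using h2
  let e := fun x => (key x).some
  refine ⟨(Equiv.sigmaFiberEquiv a).symm.trans
    ((Equiv.sigmaCongrRight e).trans (Equiv.sigmaFiberEquiv b)), fun i => ?_⟩
  exact (e (a i) ⟨i, rfl⟩).2

theorem map_univ_equiv {A B X : Type*} {_ : Fintype A} {_ : Fintype B} (e : A ≃ B) (g : B → X) :
    (Finset.univ : Finset B).val.map g = (Finset.univ : Finset A).val.map fun a => g (e a) := by
  rw [← Finset.univ_map_equiv_to_embedding e, Finset.map_val, Multiset.map_map]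
  rfl

open Classical in
/-- The combinatorial type of a slope two tree with leaf set `I`, branches `J`, leaves sitting on
branches via `f`, and leaf multiplicities `μ`: for each branch, the multiset of multiplicities of
its leaves. -/
noncomputable def blocks {I J : Type} [Fintype I] [Fintype J] (f : I → J) (μ : I → ℕ) :
    Multiset (Multiset ℕ) :=
  (Finset.univ : Finset J).val.map fun j =>
    (Finset.univ : Finset {i // f i = j}).val.map fun i : {i // f i = j} => μ i

variable {I J I' J' : Type}

/-- A bijection of leaves respecting the branch relation induces a bijection of branches. -/
theorem exists_branch_equiv {f : I → J} {f' : I' → J'} (hf : f.Surjective) (hf' : f'.Surjective)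
    (e : I ≃ I') (he : ∀ i j, f i = f j ↔ f' (e i) = f' (e j)) :
    ∃ g : J ≃ J', ∀ i, g (f i) = f' (e i) := by
  let s := Function.surjInv hf
  have hs : ∀ j, f (s j) = j := Function.surjInv_eq hf
  have key : ∀ i, f' (e (s (f i))) = f' (e i) := fun i => (he _ _).1 (hs _)
  refine ⟨Equiv.ofBijective (fun j => f' (e (s j))) ⟨fun j j' h => ?_, fun j' => ?_⟩, key⟩
  · have := (he _ _).2 h
    rwa [hs, hs] at this
  · obtain ⟨i', rfl⟩ := hf' j'
    exact ⟨f (e.symm i'), by simpa using key (e.symm i')⟩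

variable [Fintype I] [Fintype J] [Fintype I'] [Fintype J']

theorem exists_equiv_of_blocks_eq {f : I → J} {μ : I → ℕ} {f' : I' → J'} {μ' : I' → ℕ}
    (h : blocks f μ = blocks f' μ') :
    ∃ e : I ≃ I', (∀ i j, f i = f j ↔ f' (e i) = f' (e j)) ∧ ∀ i, μ' (e i) = μ i := by
  classical
  obtain ⟨g, hg⟩ := exists_equiv_of_map_eq _ _ h
  choose e he using fun j => exists_equiv_of_map_eq _ _ (hg j).symm
  let E : I ≃ I' := (Equiv.sigmaFiberEquiv f).symm.trans
    ((Equiv.sigmaCongr g e).trans (Equiv.sigmaFiberEquiv f'))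
  have hE : ∀ i, f' (E i) = g (f i) := fun i => (e (f i) ⟨i, rfl⟩).2
  refine ⟨E, fun i j => ?_, fun i => he (f i) ⟨i, rfl⟩⟩
  rw [hE, hE, g.injective.eq_iff]

theorem blocks_congr {f : I → J} {μ : I → ℕ} {f' : I' → J'} {μ' : I' → ℕ}
    (hf : f.Surjective) (hf' : f'.Surjective)
    (e : I ≃ I') (he : ∀ i j, f i = f j ↔ f' (e i) = f' (e j)) (hμ : ∀ i, μ' (e i) = μ i) :
    blocks f μ = blocks f' μ' := by
  classical
  obtain ⟨g, hg⟩ := exists_branch_equiv hf hf' e he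
  unfold blocks
  rw [map_univ_equiv g]
  refine Multiset.map_congr rfl fun j _ => ?_
  let E : {i // f i = j} ≃ {i' // f' i' = g j} := e.subtypeEquiv fun i => by
    rw [← hg, g.injective.eq_iff]
  rw [map_univ_equiv E]
  exact Multiset.map_congr rfl fun i _ => (hμ i).symm

theorem card_blocks (f : I → J) (μ : I → ℕ) : (blocks f μ).card = Fintype.card J := by
  simp [blocks]

theorem sum_blocks (f : I → J) (μ : I → ℕ) : ((blocks f μ).map Multiset.sum).sum = ∑ i, μ i := by
  classical
  rw [blocks, Multiset.map_map, ← Fintype.sum_fiberwise f μ]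
  rfl

theorem mem_blocks_pos {f : I → J} {μ : I → ℕ} (hf : f.Surjective) (hμ : ∀ i, 1 ≤ μ i)
    {B : Multiset ℕ} (hB : B ∈ blocks f μ) : B ≠ 0 ∧ ∀ x ∈ B, 1 ≤ x := by
  classical
  obtain ⟨j, -, rfl⟩ := Multiset.mem_map.1 hB
  constructor
  · obtain ⟨i, hi⟩ := hf j
    intro h0
    have : μ i ∈ (0 : Multiset ℕ) := h0 ▸ Multiset.mem_map.2 ⟨⟨i, hi⟩, Finset.mem_univ _, rfl⟩
    simp at this
  · intro x hx
    obtain ⟨i, -, rfl⟩ := Multiset.mem_map.1 hx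
    exact hμ i

/-- Every multiset is the multiset of values of a finite family. -/
theorem exists_family {X : Type*} (M : Multiset X) :
    ∃ (m : ℕ) (ν : Fin m → X), (Finset.univ : Finset (Fin m)).val.map ν = M := by
  refine Quotient.inductionOn M fun l => ⟨l.length, l.get, ?_⟩
  simp [Fin.univ_val_map]

theorem exists_presentation (D : Multiset (Multiset ℕ)) (hD : ∀ B ∈ D, B ≠ 0) :
    ∃ (I J : Type) (_ : Fintype I) (_ : Fintype J) (f : I → J) (μ : I → ℕ),
      f.Surjective ∧ blocks f μ = D := by
  classical
  obtain ⟨m, B, rfl⟩ := exists_family D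
  choose q ν hν using fun j => exists_family (B j)
  refine ⟨Σ j : Fin m, Fin (q j), Fin m, inferInstance, inferInstance, Sigma.fst,
    fun p => ν p.1 p.2, fun j => ?_, ?_⟩
  · have h0 := hD (B j) (Multiset.mem_map.2 ⟨j, Finset.mem_univ_val _, rfl⟩)
    have hq : 0 < q j := by
      rcases Nat.eq_zero_or_pos (q j) with h | h
      · exfalso; apply h0; rw [← Multiset.card_eq_zero, ← hν j]; simp [h]
      · exact h
    exact ⟨⟨j, ⟨0, hq⟩⟩, rfl⟩
  · unfold blocks
    refine Multiset.map_congr rfl fun j _ => ?_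
    rw [← hν j]
    let E : Fin (q j) ≃ {i : Σ j : Fin m, Fin (q j) // i.1 = j} :=
      (Equiv.sigmaSubtype (β := fun j => Fin (q j)) j).symm
    exact map_univ_equiv E _

end Presentations

/-! ### Slope two trees and their combinatorial types -/

section Trees

theorem FChain.size_add_two {m : ℕ} (c : FChain 2 m) (i : ℕ) : c.size (i + 2) = 1 := by
  induction i with
  | zero => exact c.size_top
  | succ i ih =>
    have h1 := Fintype.card_le_of_surjective _ (c.surj (i + 2))
    simp only [Fintype.card_fin] at h1
    have x : Fin (c.size (i + 2)) := ⟨0, by omega⟩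
    have := (c.map (i + 2) x).pos
    change c.size (i + 2 + 1) = 1
    omega

/-- The combinatorial type of an untwisted fission tree of slope two. -/
noncomputable def FTree.type {n : ℕ} (T : FTree 2 n) : Multiset (Multiset ℕ) :=
  blocks (T.chain.map 0) T.mult

theorem FTree.iso_iff {n : ℕ} (T U : FTree 2 n) : T.Iso U ↔ T.type = U.type := by
  constructor
  · rintro ⟨e, he, hm⟩
    refine blocks_congr (T.chain.surj 0) (U.chain.surj 0) (e 0) (fun i j => ?_) hm
    rw [← he, ← he, (e (0 + 1)).injective.eq_iff]
  · intro h
    obtain ⟨e, he, hm⟩ := exists_equiv_of_blocks_eq h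
    obtain ⟨g, hg⟩ := exists_branch_equiv (T.chain.surj 0) (U.chain.surj 0) e he
    refine ⟨fun i => match i with
      | 0 => e
      | 1 => g
      | i + 2 => finCongr ((T.chain.size_add_two i).trans (U.chain.size_add_two i).symm),
      fun i x => ?_, hm⟩
    match i with
    | 0 => exact hg x
    | i + 1 =>
      have : Subsingleton (Fin (U.chain.size (i + 2))) := by
        rw [U.chain.size_add_two]; infer_instance
      exact Subsingleton.elim (α := Fin (U.chain.size (i + 2))) _ _

/-- The possible combinatorial types of slope two trees of rank `n`. -/
def types (n : ℕ) : Set (Multiset (Multiset ℕ)) :=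
  {D | 2 ≤ D.card ∧ (∀ B ∈ D, B ≠ 0 ∧ ∀ x ∈ B, 1 ≤ x) ∧ (D.map Multiset.sum).sum = n}

theorem FTree.type_mem {n : ℕ} (T : FTree 2 n) : T.type ∈ types n := by
  refine ⟨?_, fun B hB => mem_blocks_pos (T.chain.surj 0) T.mult_pos hB, ?_⟩
  · rw [FTree.type, card_blocks, Fintype.card_fin]
    exact T.exact.resolve_left (by norm_num)
  · rw [FTree.type, sum_blocks]; exact T.mult_sum

/-- The slope two chain `I ↠ J ↠ pt` attached to a surjection, with all sets numbered. -/
noncomputable def chainOf {I J : Type} [Fintype I] [Fintype J] (f : I → J) (hf : f.Surjective)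
    (hJ : 0 < Fintype.card J) : FChain 2 (Fintype.card I) where
  size i := match i with
    | 0 => Fintype.card I
    | 1 => Fintype.card J
    | _ + 2 => 1
  map i := match i with
    | 0 => fun x => Fintype.equivFin J (f ((Fintype.equivFin I).symm x))
    | 1 => fun _ => (0 : Fin 1)
    | _ + 2 => fun _ => (0 : Fin 1)
  surj i := match i with
    | 0 => (Fintype.equivFin J).surjective.comp (hf.comp (Fintype.equivFin I).symm.surjective)
    | 1 => fun _ => ⟨⟨0, hJ⟩, (Subsingleton.elim (α := Fin 1) _ _)⟩
    | _ + 2 => fun _ => ⟨(0 : Fin 1), (Subsingleton.elim (α := Fin 1) _ _)⟩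
  size_zero := rfl
  size_top := rfl

theorem exists_tree {n : ℕ} {D : Multiset (Multiset ℕ)} (hD : D ∈ types n) :
    ∃ T : FTree 2 n, T.type = D := by
  obtain ⟨h2, hB, hn⟩ := hD
  obtain ⟨I, J, _, _, f, μ, hf, rfl⟩ := exists_presentation D fun B h => (hB B h).1
  rw [card_blocks] at h2
  rw [sum_blocks] at hn
  have hμ : ∀ i, 1 ≤ μ i := by
    classical
    intro i
    exact (hB _ (Multiset.mem_map.2 ⟨f i, Finset.mem_univ _, rfl⟩)).2 _
      (Multiset.mem_map.2 ⟨⟨i, rfl⟩, Finset.mem_univ _, rfl⟩)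
  refine ⟨⟨Fintype.card I, chainOf f hf (by omega), Or.inr h2,
    fun x => μ ((Fintype.equivFin I).symm x), fun x => hμ _, ?_⟩, ?_⟩
  · rw [← hn]
    exact (Fintype.equivFin I).symm.sum_comp μ
  · refine blocks_congr (FChain.surj _ 0) hf (Fintype.equivFin I).symm (fun i j => ?_)
      fun i => rfl
    exact (Fintype.equivFin J).injective.eq_iff

theorem types_finite (n : ℕ) : (types n).Finite := by
  classical
  -- a multiset of positive numbers with sum `≤ n` has at most `n` elements, all of them `≤ n`
  have key : ∀ (X : Type) (s : Finset X) (M : Multiset X), (∀ x ∈ M, x ∈ s) → M.card ≤ n →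
      M ≤ n • s.val := by
    intro X s M hs hM
    classical
    rw [Multiset.le_iff_count]
    intro x
    by_cases hx : x ∈ M
    · rw [Multiset.count_nsmul, Multiset.count_eq_one_of_mem s.nodup (hs x hx)]
      simpa using (Multiset.count_le_card x M).trans hM
    · rw [Multiset.count_eq_zero_of_notMem hx]; exact Nat.zero_le _
  have hcard : ∀ M : Multiset ℕ, (∀ x ∈ M, 1 ≤ x) → M.card ≤ M.sum := by
    intro M h
    simpa using Multiset.card_nsmul_le_sum (a := 1) h
  let s : Finset (Multiset ℕ) := Finset.Icc 0 (n • (Finset.range (n + 1)).val)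
  refine (Set.finite_Icc 0 (n • s.val)).subset ?_
  rintro D ⟨-, hB, hn⟩
  have hle : ∀ B ∈ D, B.sum ≤ n := fun B h => by
    rw [← hn]; exact Multiset.single_le_sum (by simp) _ (Multiset.mem_map_of_mem _ h)
  refine ⟨Multiset.zero_le _, key _ s D (fun B h => ?_) ?_⟩
  · refine Finset.mem_Icc.2 ⟨Multiset.zero_le _, key _ _ B (fun x hx => ?_)
      ((hcard B (hB B h).2).trans (hle B h))⟩
    exact Finset.mem_range.2 (Nat.lt_succ_of_le
      ((Multiset.single_le_sum (by simp) _ hx).trans (hle B h)))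
  · rw [← hn, ← Multiset.card_map Multiset.sum D]
    refine hcard _ fun x hx => ?_
    obtain ⟨B, h, rfl⟩ := Multiset.mem_map.1 hx
    have := hcard B (hB B h).2
    have h0 := Multiset.card_pos.2 (hB B h).1
    omega

theorem psi_eq_ncard (n : ℕ) : psi 2 n = (types n).ncard := by
  rw [psi, ← Nat.card_coe_set_eq]
  refine Nat.card_congr (Equiv.ofBijective
    (Quot.lift (fun T : FTree 2 n => (⟨T.type, T.type_mem⟩ : types n))
      fun T U h => Subtype.ext ((T.iso_iff U).1 h)) ⟨?_, ?_⟩)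
  · rintro ⟨T⟩ ⟨U⟩ h
    exact Quot.sound ((T.iso_iff U).2 (congrArg Subtype.val h))
  · rintro ⟨D, hD⟩
    obtain ⟨T, rfl⟩ := exists_tree hD
    exact ⟨Quot.mk _ T, rfl⟩

end Trees

/-! ### Adjacency in graphs with legs -/

section Legs

theorem MG.Iso.refl (G : MG) : G.Iso G := ⟨Equiv.refl _, fun _ _ => rfl⟩

theorem MG.Iso.symm {G H : MG} : G.Iso H → H.Iso G := fun ⟨σ, h⟩ =>
  ⟨σ.symm, fun i j => by rw [← h]; simp⟩

theorem MG.Iso.trans {G H K : MG} : G.Iso H → H.Iso K → G.Iso K := fun ⟨σ, h⟩ ⟨τ, k⟩ =>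
  ⟨σ.trans τ, fun i j => by rw [← h, ← k]; rfl⟩

variable {G : MG} {l : G.V → ℕ}

theorem snovaE_inl_inl (i j : G.V) : snovaE G l (.inl i) (.inl j) = G.e i j := rfl

theorem snovaE_inl_inr (i j : G.V) (t : Fin (l j)) :
    snovaE G l (.inl i) (.inr ⟨j, t⟩) ≠ 0 ↔ i = j ∧ t.val = 0 := by
  unfold snovaE
  simp

theorem snovaE_inr_inl (i j : G.V) (t : Fin (l j)) :
    snovaE G l (.inr ⟨j, t⟩) (.inl i) ≠ 0 ↔ i = j ∧ t.val = 0 := by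
  unfold snovaE
  simp

theorem snovaE_inr_inr (i j : G.V) (s : Fin (l i)) (t : Fin (l j)) :
    snovaE G l (.inr ⟨i, s⟩) (.inr ⟨j, t⟩) ≠ 0 ↔
      i = j ∧ (s.val + 1 = t.val ∨ t.val + 1 = s.val) := by
  unfold snovaE
  simp [or_iff_not_imp_left]

theorem snovaE_inl_inr_le (i : G.V) (y) : snovaE G l (.inl i) (.inr y) ≤ 1 := by
  unfold snovaE
  dsimp only
  split_ifs <;> simp

theorem snovaE_inr_le (x y) : snovaE G l (.inr x) y ≤ 1 := by
  rcases y with y | y <;> unfold snovaE <;> dsimp only <;> split_ifs <;> simp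

theorem snova_simple (hG : ∀ i j, G.e i j ≤ 1) (x y : (G.snova l).V) :
    (G.snova l).e x y ≤ 1 := by
  rcases x with x | x
  · rcases y with y | y
    · exact hG x y
    · exact snovaE_inl_inr_le x y
  · exact snovaE_inr_le x y

theorem card_snova : Fintype.card (G.snova l).V = ∑ i, (l i + 1) := by
  have : Fintype.card (G.snova l).V = Fintype.card (G.V ⊕ Σ i : G.V, Fin (l i)) :=
    Fintype.card_congr (Equiv.refl _)
  rw [this, Fintype.card_sum, Fintype.card_sigma, Finset.sum_add_distrib]
  simp [add_comm]

theorem eq_of_le_one_of_ne_zero_iff {a b : ℕ} (ha : a ≤ 1) (hb : b ≤ 1)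
    (h : a ≠ 0 ↔ b ≠ 0) : a = b := by omega

/-- An isomorphism of cores matching the leg lengths extends over the legs. -/
theorem snova_congr {G' : MG} {l' : G'.V → ℕ} (τ : G.V ≃ G'.V)
    (hτ : ∀ i j, G'.e (τ i) (τ j) = G.e i j) (hl : ∀ i, l' (τ i) = l i) :
    (G.snova l).Iso (G'.snova l') := by
  refine ⟨Equiv.sumCongr τ (Equiv.sigmaCongr τ fun i => finCongr (hl i).symm), ?_⟩
  change ∀ x y, snovaE G' l' _ _ = snovaE G l x y
  rintro (i | ⟨i, s⟩) (j | ⟨j, t⟩)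
  · exact hτ i j
  · exact eq_of_le_one_of_ne_zero_iff (snovaE_inl_inr_le _ _) (snovaE_inl_inr_le _ _)
      ((snovaE_inl_inr (τ i) (τ j) (finCongr (hl j).symm t)).trans
        (by rw [snovaE_inl_inr, τ.injective.eq_iff]; simp))
  · exact eq_of_le_one_of_ne_zero_iff (snovaE_inr_le _ _) (snovaE_inr_le _ _)
      ((snovaE_inr_inl (τ j) (τ i) (finCongr (hl i).symm s)).trans
        (by rw [snovaE_inr_inl, τ.injective.eq_iff]; simp))
  · exact eq_of_le_one_of_ne_zero_iff (snovaE_inr_le _ _) (snovaE_inr_le _ _)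
      ((snovaE_inr_inr (τ i) (τ j) (finCongr (hl i).symm s) (finCongr (hl j).symm t)).trans
        (by rw [snovaE_inr_inr, τ.injective.eq_iff]; simp))

/-- A vertex on a leg has one neighbour towards the core and at most one further out. -/
theorem leg_nbr (i : G.V) (t : Fin (l i)) : ∃ p, ∀ u, snovaE G l (.inr ⟨i, t⟩) u ≠ 0 →
    u = p ∨ ∃ h : t.val + 1 < l i, u = .inr ⟨i, ⟨t.val + 1, h⟩⟩ := by
  rcases Nat.eq_zero_or_pos t.val with h0 | h0
  · refine ⟨.inl i, ?_⟩
    rintro (j | ⟨j, s⟩) h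
    · rw [snovaE_inr_inl] at h
      exact Or.inl (by rw [h.1])
    · obtain ⟨rfl, h⟩ := (snovaE_inr_inr _ _ _ _).1 h
      obtain ⟨s, hs⟩ := s
      have : t.val + 1 = s := by simp only at h; omega
      subst this
      exact Or.inr ⟨hs, rfl⟩
  · refine ⟨.inr ⟨i, ⟨t.val - 1, by omega⟩⟩, ?_⟩
    rintro (j | ⟨j, s⟩) h
    · have := ((snovaE_inr_inl _ _ _).1 h).2
      omega
    · obtain ⟨rfl, h⟩ := (snovaE_inr_inr _ _ _ _).1 h
      obtain ⟨s, hs⟩ := s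
      rcases h with h | h
      · simp only at h
        subst h
        exact Or.inr ⟨hs, rfl⟩
      · left
        simp only at h
        congr 3
        omega

/-- A set of vertices in which every vertex has two neighbours inside the set avoids the legs. -/
theorem subset_core {A : Set (G.V ⊕ Σ i : G.V, Fin (l i))}
    (hA : ∀ v ∈ A, ∃ u ∈ A, ∃ w ∈ A, u ≠ w ∧ snovaE G l v u ≠ 0 ∧ snovaE G l v w ≠ 0)
    {v} (hv : v ∈ A) : ∃ i, v = .inl i := by
  rcases v with i | ⟨i, t⟩
  · exact ⟨i, rfl⟩
  exfalso
  -- otherwise the set runs outwards along the leg for ever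
  have step : ∀ d, ∃ h : t.val + d < l i, (.inr ⟨i, ⟨t.val + d, h⟩⟩ : G.V ⊕ _) ∈ A := by
    intro d
    induction d with
    | zero => exact ⟨t.2, hv⟩
    | succ d ih =>
      obtain ⟨h, hd⟩ := ih
      obtain ⟨u, hu, w, hw, huw, eu, ew⟩ := hA _ hd
      obtain ⟨p, hp⟩ := leg_nbr i (⟨t.val + d, h⟩ : Fin (l i))
      rcases hp u eu with rfl | ⟨h', rfl⟩
      · rcases hp w ew with rfl | ⟨h', rfl⟩
        · exact absurd rfl huw
        · exact ⟨h', hw⟩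
      · exact ⟨h', hu⟩
  obtain ⟨h, -⟩ := step (l i)
  omega

/-- A graph isomorphism mapping core to core maps the leg at `i` to the leg at the image of `i`,
preserving the distance to the core. -/
theorem leg_map {G' : MG} {l' : G'.V → ℕ}
    (σ : (G.V ⊕ Σ i : G.V, Fin (l i)) ≃ (G'.V ⊕ Σ i : G'.V, Fin (l' i)))
    (hσ : ∀ x y, snovaE G' l' (σ x) (σ y) = snovaE G l x y)
    (τ : G.V ≃ G'.V) (hτ : ∀ i, σ (.inl i) = .inl (τ i)) (i : G.V) :
    ∀ t (h : t < l i), ∃ h', σ (.inr ⟨i, ⟨t, h⟩⟩) = .inr ⟨τ i, ⟨t, h'⟩⟩ := by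
  have off : ∀ y, ∃ z, σ (.inr y) = .inr z := by
    intro y
    rcases hz : σ (.inr y) with j | z
    · have h1 := hτ (τ.symm j)
      rw [τ.apply_symm_apply, ← hz] at h1
      cases σ.injective h1
    · exact ⟨z, rfl⟩
  intro t
  induction t using Nat.strong_induction_on with
  | _ t ih =>
  intro h
  obtain ⟨⟨j, s⟩, hz⟩ := off ⟨i, ⟨t, h⟩⟩
  rcases t with _ | t
  · have h1 : snovaE G l (.inl i) (.inr ⟨i, ⟨0, h⟩⟩) ≠ 0 := (snovaE_inl_inr _ _ _).2 ⟨rfl, rfl⟩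
    rw [← hσ, hτ, hz, snovaE_inl_inr] at h1
    obtain ⟨rfl, h1⟩ := h1
    refine ⟨h1 ▸ s.2, hz.trans ?_⟩
    congr 3
    exact Fin.ext h1
  · obtain ⟨h', ht⟩ := ih t (by omega) (by omega)
    have h1 : snovaE G l (.inr ⟨i, ⟨t, by omega⟩⟩) (.inr ⟨i, ⟨t + 1, h⟩⟩) ≠ 0 :=
      (snovaE_inr_inr _ _ _ _).2 ⟨rfl, Or.inl rfl⟩
    rw [← hσ, ht, hz, snovaE_inr_inr] at h1
    obtain ⟨rfl, h1⟩ := h1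
    rcases h1 with h1 | h1
    · simp only at h1
      refine ⟨h1 ▸ s.2, hz.trans ?_⟩
      congr 3
      exact Fin.ext h1.symm
    · exfalso
      simp only at h1
      obtain ⟨h'', hs⟩ := ih s.val (by omega) (by omega)
      have := σ.injective (hs.trans hz.symm)
      simp at this
      omega

/-- A graph isomorphism mapping core onto core induces an isomorphism of the cores preserving the
leg lengths. -/
theorem core_iso {G' : MG} {l' : G'.V → ℕ}
    (σ : (G.V ⊕ Σ i : G.V, Fin (l i)) ≃ (G'.V ⊕ Σ i : G'.V, Fin (l' i)))
    (hσ : ∀ x y, snovaE G' l' (σ x) (σ y) = snovaE G l x y)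
    (h : ∀ i, ∃ j, σ (.inl i) = .inl j) (h' : ∀ j, ∃ i, σ.symm (.inl j) = .inl i) :
    ∃ τ : G.V ≃ G'.V, (∀ i j, G'.e (τ i) (τ j) = G.e i j) ∧ ∀ i, l' (τ i) = l i := by
  choose a ha using h
  choose b hb using h'
  let τ : G.V ≃ G'.V := ⟨a, b, fun i => by
    have := hb (a i)
    rw [← ha, σ.symm_apply_apply] at this
    exact (Sum.inl_injective this).symm, fun j => by
    have := ha (b j)
    rw [← hb, σ.apply_symm_apply] at this
    exact (Sum.inl_injective this).symm⟩
  have hτ : ∀ i, σ (.inl i) = .inl (τ i) := ha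
  have hτ' : ∀ i, σ.symm (.inl i) = .inl (τ.symm i) := hb
  have hσ' : ∀ x y, snovaE G l (σ.symm x) (σ.symm y) = snovaE G' l' x y := by
    intro x y; rw [← hσ]; simp
  refine ⟨τ, fun i j => ?_, fun i => le_antisymm ?_ ?_⟩
  · have := hσ (.inl i) (.inl j)
    rwa [hτ, hτ] at this
  · by_contra hlt
    obtain ⟨hc, -⟩ := leg_map σ.symm hσ' τ.symm hτ' (τ i) (l i) (by omega)
    rw [τ.symm_apply_apply] at hc
    omega
  · by_contra hlt
    obtain ⟨hc, -⟩ := leg_map σ hσ τ hτ i (l' (τ i)) (by omega)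
    omega

end Legs

/-! ### The graph of a presentation -/

section TreeGraph

open Classical in
/-- The complete multipartite graph on `I` whose parts are the fibres of `f`. -/
noncomputable abbrev multipartite {I J : Type} [Fintype I] (f : I → J) : MG where
  V := I
  e i j := if f i = f j then 0 else 1
  symm i j := by simp only [eq_comm]
  loopless i := by simp

theorem multipartite_ne_zero {I J : Type} [Fintype I] (f : I → J) (i j : I) :
    (multipartite f).e i j ≠ 0 ↔ f i ≠ f j := by
  simp

theorem multipartite_le {I J : Type} [Fintype I] (f : I → J) (i j : I) :
    (multipartite f).e i j ≤ 1 := by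
  dsimp only
  split_ifs <;> simp

/-- The simple supernova graph of a presentation: a leaf of multiplicity `μ i` becomes a core
vertex carrying a leg of length `μ i - 1`. -/
noncomputable def treeGraph {I J : Type} [Fintype I] (f : I → J) (μ : I → ℕ) : MG :=
  (multipartite f).snova fun i => μ i - 1

/-- Vertices of `treeGraph f μ`. -/
abbrev TreeV {I : Type} (μ : I → ℕ) : Type := I ⊕ Σ i : I, Fin (μ i - 1)

/-- Edge multiplicities of `treeGraph f μ`. -/
noncomputable abbrev treeE {I J : Type} [Fintype I] (f : I → J) (μ : I → ℕ) :
    TreeV μ → TreeV μ → ℕ := snovaE (multipartite f) fun i => μ i - 1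

/-- The coordinates of a vertex: the core vertex it hangs from and the distance to it. -/
def TreeV.pos {I : Type} {μ : I → ℕ} : TreeV μ → I × ℕ
  | .inl i => (i, 0)
  | .inr ⟨i, t⟩ => (i, t.val + 1)

theorem TreeV.pos_injective {I : Type} {μ : I → ℕ} :
    (TreeV.pos : TreeV μ → I × ℕ).Injective := by
  rintro (i | ⟨i, s, hs⟩) (j | ⟨j, t, ht⟩) h <;> simp [TreeV.pos] at h
  · rw [h]
  · obtain ⟨rfl, rfl⟩ := h
    rfl

variable {I J I' J' : Type} [Fintype I] [Fintype I']
  {f : I → J} {μ : I → ℕ} {f' : I' → J'} {μ' : I' → ℕ}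

theorem treeE_inl_inl (i j : I) : treeE f μ (.inl i) (.inl j) ≠ 0 ↔ f i ≠ f j :=
  multipartite_ne_zero f i j

theorem treeE_inl_inr (i j : I) (t : Fin (μ j - 1)) :
    treeE f μ (.inl i) (.inr ⟨j, t⟩) ≠ 0 ↔ i = j ∧ t.val = 0 :=
  snovaE_inl_inr (G := multipartite f) (l := fun i => μ i - 1) i j t

theorem treeE_inr_inl (i j : I) (t : Fin (μ j - 1)) :
    treeE f μ (.inr ⟨j, t⟩) (.inl i) ≠ 0 ↔ i = j ∧ t.val = 0 :=
  snovaE_inr_inl (G := multipartite f) (l := fun i => μ i - 1) i j t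

theorem treeE_inr_inr (i j : I) (s : Fin (μ i - 1)) (t : Fin (μ j - 1)) :
    treeE f μ (.inr ⟨i, s⟩) (.inr ⟨j, t⟩) ≠ 0 ↔
      i = j ∧ (s.val + 1 = t.val ∨ t.val + 1 = s.val) :=
  snovaE_inr_inr (G := multipartite f) (l := fun i => μ i - 1) i j s t

/-- Adjacency in `treeGraph f μ` in terms of coordinates. -/
theorem treeE_ne_zero (x y : TreeV μ) : treeE f μ x y ≠ 0 ↔
    (x.pos.2 = 0 ∧ y.pos.2 = 0 ∧ f x.pos.1 ≠ f y.pos.1) ∨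
      (x.pos.1 = y.pos.1 ∧ (x.pos.2 + 1 = y.pos.2 ∨ y.pos.2 + 1 = x.pos.2)) := by
  rcases x with i | ⟨i, s⟩ <;> rcases y with j | ⟨j, t⟩
  · exact (treeE_inl_inl i j).trans (by simp [TreeV.pos])
  · exact (treeE_inl_inr i j t).trans (by simp [TreeV.pos])
  · exact (treeE_inr_inl j i s).trans (by simp [TreeV.pos, eq_comm])
  · exact (treeE_inr_inr i j s t).trans (by simp [TreeV.pos])

theorem treeE_le (x y : TreeV μ) : treeE f μ x y ≤ 1 :=
  snova_simple (G := multipartite f) (multipartite_le f) x y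

theorem card_treeGraph (hμ : ∀ i, 1 ≤ μ i) : Fintype.card (treeGraph f μ).V = ∑ i, μ i := by
  refine card_snova.trans (Finset.sum_congr rfl fun i _ => ?_)
  exact Nat.sub_add_cancel (hμ i)

variable [Fintype J] [Fintype J']

theorem treeGraph_congr (h : blocks f μ = blocks f' μ') :
    (treeGraph f μ).Iso (treeGraph f' μ') := by
  obtain ⟨e, he, hm⟩ := exists_equiv_of_blocks_eq h
  refine snova_congr (G := multipartite f) (G' := multipartite f') e (fun (i j : I) => ?_)
    fun (i : I) => ?_
  · refine eq_of_le_one_of_ne_zero_iff (multipartite_le _ _ _) (multipartite_le _ _ _) ?_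
    rw [multipartite_ne_zero, multipartite_ne_zero, ne_eq, ne_eq, he]
  · rw [hm]

/-- An isomorphism mapping core onto core preserves the combinatorial type. -/
theorem blocks_eq_of_core (hf : f.Surjective) (hf' : f'.Surjective)
    (hμ : ∀ i, 1 ≤ μ i) (hμ' : ∀ i, 1 ≤ μ' i) (σ : TreeV μ ≃ TreeV μ')
    (hσ : ∀ x y, treeE f' μ' (σ x) (σ y) = treeE f μ x y)
    (h : ∀ i, ∃ j, σ (.inl i) = .inl j) (h' : ∀ j, ∃ i, σ.symm (.inl j) = .inl i) :
    blocks f μ = blocks f' μ' := by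
  obtain ⟨τ, h1, h2⟩ := core_iso (G := multipartite f) (G' := multipartite f') σ hσ h h'
  refine blocks_congr hf hf' τ (fun i j => ?_) fun i => ?_
  · rw [← not_iff_not, ← ne_eq, ← ne_eq, ← multipartite_ne_zero, ← multipartite_ne_zero f', h1]
  · have := h2 i
    have := hμ i
    have := hμ' (τ i)
    omega

/-! ### Stars -/

/-- `z` is alone in its part and all other vertices form a single part, so that `multipartite f`
is a star with centre `z`. -/
def IsStar (f : I → J) (z : I) : Prop := ∀ j k, f j = f k ↔ (j = z ↔ k = z)

/-- Every core vertex has at least two core neighbours. -/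
def IsThick (f : I → J) : Prop := ∀ i, ∃ j k, j ≠ k ∧ f i ≠ f j ∧ f i ≠ f k

omit [Fintype I] in
theorem thick_or_star (hf : f.Surjective) (hJ : 2 ≤ Fintype.card J) :
    IsThick f ∨ ∃ z, IsStar f z ∧ ∃ k, k ≠ z := by
  by_cases h : IsThick f
  · exact Or.inl h
  right
  unfold IsThick at h
  push Not at h
  obtain ⟨i, hi⟩ := h
  obtain ⟨j, hj⟩ := Fintype.exists_ne_of_one_lt_card hJ (f i)
  obtain ⟨z, rfl⟩ := hf j
  have hz : ∀ k, k ≠ z → f i = f k := fun k hk => hi z k hk.symm hj.symm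
  refine ⟨z, fun j k => ?_, i, fun h => hj (by rw [h])⟩
  by_cases h1 : j = z <;> by_cases h2 : k = z
  · simp [h1, h2]
  · simp [h1, h2, ← hz k h2, hj]
  · simp [h1, h2, ← hz j h1, hj.symm]
  · simp [h1, h2, ← hz j h1, ← hz k h2]

theorem isSome_surjective {K : Type} [Nonempty K] :
    (Option.isSome : Option K → Bool).Surjective := by
  rintro (_ | _)
  · exact ⟨none, rfl⟩
  · exact ⟨some (Classical.arbitrary K), rfl⟩

/-- The combinatorial type of the standard star, with centre `none` of multiplicity `x`. -/
theorem blocks_option {K : Type} [Fintype K] (x : ℕ) (ν : K → ℕ) :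
    blocks (Option.isSome : Option K → Bool) (fun o => o.elim x ν) =
      {{x}, (Finset.univ : Finset K).val.map ν} := by
  unfold blocks
  rw [Fintype.univ_bool, Multiset.pair_comm]
  refine congrArg₂ (fun a b : Multiset ℕ => ({a, b} : Multiset (Multiset ℕ))) ?_ ?_
  · exact map_univ_equiv (Equiv.optionIsSomeEquiv K).symm _
  · let E : Unit ≃ {i : Option K // i.isSome = false} :=
      ⟨fun _ => ⟨none, rfl⟩, fun _ => (), fun _ => rfl, by
        rintro ⟨_ | i, h⟩
        · rfl
        · simp at h⟩
    exact map_univ_equiv E fun i : {i : Option K // i.isSome = false} => i.1.elim x ν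

theorem blocks_star {z : I} (hf : f.Surjective) (hz : IsStar f z) (hk : ∃ k, k ≠ z)
    (μ : I → ℕ) :
    blocks f μ =
      {{μ z}, by classical exact (Finset.univ : Finset {k // k ≠ z}).val.map fun k : {k // k ≠ z} => μ k} := by
  classical
  have : Nonempty {k // k ≠ z} := ⟨⟨hk.choose, hk.choose_spec⟩⟩
  refine Eq.trans ?_ (blocks_option (K := {k // k ≠ z}) (μ z) fun k => μ k)
  refine blocks_congr hf isSome_surjective (Equiv.optionSubtypeNe z).symm (fun i j => ?_)
    fun i => ?_
  · rw [hz]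
    have : ∀ i, ((Equiv.optionSubtypeNe z).symm i).isSome = true ↔ i ≠ z := by
      intro i
      by_cases h : i = z
      · simp [h]
      · simp [h, Equiv.optionSubtypeNe_symm_of_ne h]
    rw [Bool.eq_iff_iff, this, this, not_iff_not]
  · by_cases h : i = z
    · simp [h]
    · simp [Equiv.optionSubtypeNe_symm_of_ne h]

end TreeGraph

/-! ### Redundant presentations -/

section Redundancy

/-- Moving the centre's leg of a star to a new arm does not change the graph. -/
theorem star_move {K : Type} [Fintype K] (ν : K → ℕ) (c : ℕ) (hc : 1 ≤ c) (hν : ∀ k, 1 ≤ ν k) :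
    (treeGraph (Option.isSome : Option (Option K) → Bool)
      (fun o => o.elim 1 fun p => p.elim c ν)).Iso
    (treeGraph (Option.isSome : Option K → Bool) fun o => o.elim (c + 1) ν) := by
  set μ : Option (Option K) → ℕ := fun o => o.elim 1 fun p => p.elim c ν with hμ
  set μ' : Option K → ℕ := fun o => o.elim (c + 1) ν with hμ'
  let φ : TreeV μ → TreeV μ' := fun v => match v with
    | .inl none => .inl none
    | .inl (some none) => .inr ⟨none, ⟨0, hc⟩⟩
    | .inl (some (some k)) => .inl (some k)
    | .inr ⟨none, _⟩ => .inl none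
    | .inr ⟨some none, t⟩ => .inr ⟨none, ⟨t.val + 1, by
        have h : t.val < c - 1 := t.2
        show t.val + 1 < c
        omega⟩⟩
    | .inr ⟨some (some k), t⟩ => .inr ⟨some k, t⟩
  have hinj : φ.Injective := by
    rintro ((_ | _ | i) | ⟨_ | _ | i, s⟩) ((_ | _ | j) | ⟨_ | _ | j, t⟩) h
    all_goals first
      | exact Fin.elim0 s
      | exact Fin.elim0 t
      | skip
    all_goals
      refine TreeV.pos_injective ?_
      have h' := congrArg TreeV.pos h
      first
        | (simp [φ, TreeV.pos] at h' ⊢; done)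
        | (simp [φ, TreeV.pos] at h' ⊢; exact h')
  have hcard : Fintype.card (TreeV μ) = Fintype.card (TreeV μ') := by
    refine (card_treeGraph (f := Option.isSome) (μ := μ) ?_).trans
      (Eq.trans ?_ (card_treeGraph (f := Option.isSome) (μ := μ') ?_).symm)
    · rintro (_ | _ | k)
      · exact le_refl 1
      · exact hc
      · exact hν k
    · simp only [Fintype.sum_option, hμ, hμ', Option.elim]
      omega
    · rintro (_ | k)
      · exact Nat.le_add_left 1 c
      · exact hν k
  refine ⟨Equiv.ofBijective φ ((Fintype.bijective_iff_injective_and_card φ).2 ⟨hinj, hcard⟩), ?_⟩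
  change ∀ x y, treeE _ μ' (φ x) (φ y) = treeE _ μ x y
  intro x y
  refine eq_of_le_one_of_ne_zero_iff (treeE_le _ _) (treeE_le _ _) ?_
  rcases x with (_ | _ | i) | ⟨_ | _ | i, s⟩ <;> rcases y with (_ | _ | j) | ⟨_ | _ | j, t⟩
  all_goals
    rw [treeE_ne_zero, treeE_ne_zero]
    first
      | exact Fin.elim0 s
      | exact Fin.elim0 t
      | simp [φ, TreeV.pos]

/-- `G` is the graph of a presentation of combinatorial type `D`. -/
def Presents (G : MG) (D : Multiset (Multiset ℕ)) : Prop :=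
  ∃ (I J : Type) (_ : Fintype I) (_ : Fintype J) (f : I → J) (μ : I → ℕ),
    blocks f μ = D ∧ G.Iso (treeGraph f μ)

theorem presents_iff {G : MG} {I J : Type} [Fintype I] [Fintype J] (f : I → J) (μ : I → ℕ) :
    Presents G (blocks f μ) ↔ G.Iso (treeGraph f μ) :=
  ⟨fun ⟨_, _, _, _, _, _, h, h'⟩ => h'.trans (treeGraph_congr h),
    fun h => ⟨I, J, _, _, f, μ, rfl, h⟩⟩

theorem presents_move {G : MG} {c : ℕ} {L : Multiset ℕ} (hc : 1 ≤ c) (hL : ∀ x ∈ L, 1 ≤ x) :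
    Presents G {{c + 1}, L} ↔ Presents G {{1}, c ::ₘ L} := by
  obtain ⟨m, ν, rfl⟩ := exists_family L
  have h1 := blocks_option (c + 1) ν
  have h2 := blocks_option (K := Option (Fin m)) 1 fun p => p.elim c ν
  have h3 : (Finset.univ : Finset (Option (Fin m))).val.map (fun p => p.elim c ν) =
      c ::ₘ (Finset.univ : Finset (Fin m)).val.map ν := by
    change (Finset.insertNone (Finset.univ : Finset (Fin m))).val.map _ = _
    rw [Finset.insertNone]
    change Multiset.map _ (none ::ₘ Multiset.map some (Finset.univ : Finset (Fin m)).val) = _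
    rw [Multiset.map_cons, Multiset.map_map]
    rfl
  rw [← h3, ← h1, ← h2, presents_iff, presents_iff]
  have := star_move ν c hc fun k => hL _ (Multiset.mem_map_of_mem _ (Finset.mem_univ k))
  exact ⟨fun h => h.trans this.symm, fun h => h.trans this⟩

/-- The combinatorial types discarded from the count. A star core with centre of multiplicity
`c + 1 ≥ 2` can be replaced by a star core with one more arm; when the resulting graph is a path,
all its types but `{{1}, {n - 1}}` are discarded. -/
def Redundant (D : Multiset (Multiset ℕ)) : Prop :=
  (∃ (c : ℕ) (L : Multiset ℕ), 1 ≤ c ∧ 2 ≤ L.card ∧ D = {{c + 1}, L}) ∨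
    (∃ c a : ℕ, 1 ≤ c ∧ c < a ∧ D = {{c + 1}, {a}}) ∨
    ∃ c a : ℕ, 1 ≤ a ∧ a ≤ c ∧ D = {{1}, {c, a}}

theorem pair_eq {X : Type*} {a b c d : X} (h : ({a, b} : Multiset X) = {c, d}) :
    (a = c ∧ b = d) ∨ (a = d ∧ b = c) := by
  rcases Multiset.cons_eq_cons.1 h with ⟨h1, h2⟩ | ⟨-, s, h1, h2⟩
  · exact Or.inl ⟨h1, Multiset.singleton_inj.1 h2⟩
  · have hs : s = 0 := by
      have := congrArg Multiset.card h1
      rw [← Multiset.card_eq_zero]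
      simpa using this.symm
    subst hs
    exact Or.inr ⟨(Multiset.singleton_inj.1 h2).symm, Multiset.singleton_inj.1 h1⟩

theorem not_redundant_star {L : Multiset ℕ} (hL : 3 ≤ L.card) : ¬ Redundant {{1}, L} := by
  have hne : ∀ x, {x} ≠ L := by rintro x rfl; simp at hL
  rintro (⟨c, M, hc, -, h⟩ | ⟨c, a, hc, -, h⟩ | ⟨c, a, -, -, h⟩)
  · rcases pair_eq h with ⟨h, -⟩ | ⟨-, h⟩
    · have := Multiset.singleton_inj.1 h; omega
    · exact hne _ h.symm
  · rcases pair_eq h with ⟨-, h⟩ | ⟨-, h⟩ <;> exact hne _ h.symm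
  · rcases pair_eq h with ⟨-, h⟩ | ⟨-, h⟩
    · subst h; simp at hL
    · exact hne _ h.symm

theorem not_redundant_path {m : ℕ} : ¬ Redundant {{1}, {m}} := by
  rintro (⟨c, L, hc, hL, h⟩ | ⟨c, a, hc, hca, h⟩ | ⟨c, a, -, -, h⟩)
  · rcases pair_eq h with ⟨-, h⟩ | ⟨h, -⟩ <;> rw [← h] at hL <;> simp at hL
  · rcases pair_eq h with ⟨h, -⟩ | ⟨h, -⟩ <;> have := Multiset.singleton_inj.1 h <;> omega
  · rcases pair_eq h with ⟨-, h⟩ | ⟨h, -⟩ <;> have := congrArg Multiset.card h <;> simp at this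

theorem presents_path {G : MG} (c a : ℕ) (hc : 1 ≤ c) (ha : 1 ≤ a)
    (h : Presents G {{1}, {c, a}}) : Presents G {{1}, {c + a}} := by
  induction c generalizing a with
  | zero => omega
  | succ c ih =>
    -- move the arm of length `a` into the leg of the centre, and take the other vertex as centre
    have h1 : Presents G {{c + 1}, {a + 1}} := by
      rw [Multiset.pair_comm (c + 1) a] at h
      have := (presents_move (L := {c + 1}) ha (by simp)).2 h
      rwa [Multiset.pair_comm] at this
    rcases Nat.eq_zero_or_pos c with rfl | hc'
    · simpa [add_comm] using h1
    · have := ih (a + 1) hc' (by omega) ((presents_move (L := {a + 1}) hc' (by simp)).1 h1)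
      convert this using 4
      omega

theorem exists_nonredundant {G : MG} {n : ℕ} {D : Multiset (Multiset ℕ)} (hD : D ∈ types n)
    (hG : Presents G D) : ∃ D' ∈ types n, ¬ Redundant D' ∧ Presents G D' := by
  by_cases h : Redundant D
  swap
  · exact ⟨D, hD, h, hG⟩
  obtain ⟨-, hB, hn⟩ := hD
  have path : ∀ c a, 1 ≤ c → 1 ≤ a → 1 + (c + a) = n → Presents G {{1}, {c, a}} →
      ∃ D' ∈ types n, ¬ Redundant D' ∧ Presents G D' := by
    intro c a hc ha hn h
    refine ⟨_, ⟨?_, ?_, ?_⟩, not_redundant_path, presents_path c a hc ha h⟩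
    · simp
    · simp; omega
    · simpa using hn
  rcases h with ⟨c, L, hc, hL, rfl⟩ | ⟨c, a, hc, hca, rfl⟩ | ⟨c, a, ha, hac, rfl⟩
  · have hL' : ∀ x ∈ L, 1 ≤ x := (hB L (by simp)).2
    refine ⟨{{1}, c ::ₘ L}, ⟨by simp, ?_, ?_⟩, not_redundant_star ?_, (presents_move hc hL').1 hG⟩
    · intro B hB
      simp only [Multiset.insert_eq_cons, Multiset.mem_cons, Multiset.mem_singleton] at hB
      rcases hB with rfl | rfl
      · simp
      · refine ⟨Multiset.cons_ne_zero, fun x hx => ?_⟩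
        rcases Multiset.mem_cons.1 hx with rfl | hx
        · exact hc
        · exact hL' x hx
    · simp at hn ⊢; omega
    · rw [Multiset.card_cons]; omega
  · refine path c a hc (by omega) ?_ ((presents_move (L := {a}) hc (by simp; omega)).1 hG)
    simp at hn; omega
  · refine path c a (by omega) ha ?_ hG
    simpa using hn

end Redundancy

/-! ### A graph has only one type that is not redundant -/

section Uniqueness

variable {I J I' J' : Type} [Fintype I] [Fintype J] [Fintype I'] [Fintype J']
  {f : I → J} {μ : I → ℕ} {f' : I' → J'} {μ' : I' → ℕ}

/-- Vertices with at least three neighbours. -/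
def IsBranching (f : I → J) (μ : I → ℕ) (v : TreeV μ) : Prop :=
  ∃ a b c, a ≠ b ∧ a ≠ c ∧ b ≠ c ∧ treeE f μ v a ≠ 0 ∧ treeE f μ v b ≠ 0 ∧ treeE f μ v c ≠ 0

omit [Fintype J] [Fintype J'] in
theorem IsBranching.map {σ : TreeV μ ≃ TreeV μ'}
    (hσ : ∀ x y, treeE f' μ' (σ x) (σ y) = treeE f μ x y) {v : TreeV μ}
    (h : IsBranching f μ v) : IsBranching f' μ' (σ v) := by
  obtain ⟨a, b, c, hab, hac, hbc, ha, hb, hc⟩ := h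
  exact ⟨σ a, σ b, σ c, σ.injective.ne hab, σ.injective.ne hac, σ.injective.ne hbc,
    by rwa [hσ], by rwa [hσ], by rwa [hσ]⟩

omit [Fintype J] in
theorem not_branching_of_pos {v : TreeV μ} (p q : I × ℕ)
    (h : ∀ u, treeE f μ v u ≠ 0 → u.pos = p ∨ u.pos = q) : ¬ IsBranching f μ v := by
  rintro ⟨a, b, c, hab, hac, hbc, ha, hb, hc⟩
  have hab := TreeV.pos_injective.ne hab
  have hac := TreeV.pos_injective.ne hac
  have hbc := TreeV.pos_injective.ne hbc
  rcases h a ha with h1 | h1 <;> rcases h b hb with h2 | h2 <;> rcases h c hc with h3 | h3 <;>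
    simp_all

omit [Fintype I] [Fintype J] in
theorem IsStar.eq_of_ne {z i j : I} (hz : IsStar f z) (hi : i ≠ z) (h : f i ≠ f j) : j = z := by
  by_contra hj
  exact h ((hz i j).2 (by simp [hi, hj]))

omit [Fintype I] [Fintype J] in
theorem IsStar.ne {z i : I} (hz : IsStar f z) (hi : i ≠ z) : f z ≠ f i := fun h =>
  hi (((hz z i).1 h).1 rfl)

omit [Fintype J] in
theorem IsStar.not_branching {z : I} (hz : IsStar f z) {v : TreeV μ} (hv : v ≠ .inl z) :
    ¬ IsBranching f μ v := by
  rcases v with i | ⟨i, s⟩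
  · have hi : i ≠ z := fun h => hv (by rw [h])
    refine not_branching_of_pos (z, 0) (i, 1) fun u hu => ?_
    rw [treeE_ne_zero] at hu
    rcases hu with ⟨-, h1, h2⟩ | ⟨h1, h2⟩
    · exact Or.inl (Prod.ext (hz.eq_of_ne hi h2) h1)
    · change 0 + 1 = u.pos.2 ∨ u.pos.2 + 1 = 0 at h2
      exact Or.inr (Prod.ext h1.symm (show u.pos.2 = 1 by omega))
  · refine not_branching_of_pos (i, s.val) (i, s.val + 2) fun u hu => ?_
    rw [treeE_ne_zero] at hu
    rcases hu with ⟨h1, -⟩ | ⟨h1, h2⟩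
    · simp [TreeV.pos] at h1
    · change s.val + 1 + 1 = u.pos.2 ∨ u.pos.2 + 1 = s.val + 1 at h2
      rcases h2 with h2 | h2
      · exact Or.inr (Prod.ext h1.symm h2.symm)
      · exact Or.inl (Prod.ext h1.symm (Nat.succ_injective h2))

omit [Fintype J] in
/-- With a single arm the graph is a path. -/
theorem IsStar.not_branching_of_unique {z : I} (hz : IsStar f z)
    (h1 : ∀ i j, i ≠ z → j ≠ z → i = j) (hk : ∃ k, k ≠ z) (v : TreeV μ) :
    ¬ IsBranching f μ v := by
  by_cases hv : v = .inl z
  swap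
  · exact hz.not_branching hv
  subst hv
  obtain ⟨k, hk⟩ := hk
  refine not_branching_of_pos (k, 0) (z, 1) fun u hu => ?_
  rw [treeE_ne_zero] at hu
  rcases hu with ⟨-, h2, h3⟩ | ⟨h2, h3⟩
  · refine Or.inl (Prod.ext (h1 _ _ (fun h => h3 ?_) hk) h2)
    rw [h]; rfl
  · change 0 + 1 = u.pos.2 ∨ u.pos.2 + 1 = 0 at h3
    exact Or.inr (Prod.ext h2.symm (show u.pos.2 = 1 by omega))

omit [Fintype J] in
theorem IsStar.branching {z : I} (hz : IsStar f z)
    (h3 : ∃ a b c, a ≠ z ∧ b ≠ z ∧ c ≠ z ∧ a ≠ b ∧ a ≠ c ∧ b ≠ c) :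
    IsBranching f μ (.inl z) := by
  obtain ⟨a, b, c, ha, hb, hc, hab, hac, hbc⟩ := h3
  refine ⟨.inl a, .inl b, .inl c, by simpa, by simpa, by simpa, ?_, ?_, ?_⟩
  · exact (treeE_inl_inl z a).2 (hz.ne ha)
  · exact (treeE_inl_inl z b).2 (hz.ne hb)
  · exact (treeE_inl_inl z c).2 (hz.ne hc)

/-- A star type that is not redundant either has a centre of multiplicity one with at least three
arms, or is the chosen type of a path. -/
theorem IsStar.dichotomy {z : I} (hf : f.Surjective) (hz : IsStar f z) (hk : ∃ k, k ≠ z)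
    (hμ : ∀ i, 1 ≤ μ i) (hR : ¬ Redundant (blocks f μ)) :
    (μ z = 1 ∧ ∃ a b c, a ≠ z ∧ b ≠ z ∧ c ≠ z ∧ a ≠ b ∧ a ≠ c ∧ b ≠ c) ∨
      ((∀ i j, i ≠ z → j ≠ z → i = j) ∧ ∃ a, blocks f μ = {{1}, {a}}) := by
  classical
  have hb := blocks_star hf hz hk μ
  set L := (Finset.univ : Finset {k // k ≠ z}).val.map fun k : {k // k ≠ z} => μ k with hL
  have hLpos : ∀ x ∈ L, 1 ≤ x := by
    intro x hx
    obtain ⟨k, -, rfl⟩ := Multiset.mem_map.1 hx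
    exact hμ _
  have hcard : L.card = Fintype.card {k // k ≠ z} := by simp [hL, Finset.card_univ]
  have hb' : blocks f μ = {{μ z}, L} := by convert hb
  rw [hb'] at hR ⊢
  have hz1 := hμ z
  have hpos : 0 < L.card := by
    rw [hcard, Fintype.card_pos_iff]
    exact ⟨⟨hk.choose, hk.choose_spec⟩⟩
  rcases (show L.card = 1 ∨ L.card = 2 ∨ 3 ≤ L.card by omega) with h | h | h
  · right
    constructor
    · intro i j hi hj
      have := Fintype.card_le_one_iff.1 (hcard.symm.trans h).le ⟨i, hi⟩ ⟨j, hj⟩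
      exact congrArg Subtype.val this
    · obtain ⟨a, ha⟩ := Multiset.card_eq_one.1 h
      rw [ha] at hR hLpos ⊢
      have ha1 : 1 ≤ a := hLpos a (by simp)
      by_cases h1 : μ z = 1
      · exact ⟨a, by rw [h1]⟩
      by_cases h2 : a = 1
      · exact ⟨μ z, by rw [h2, Multiset.pair_comm]⟩
      -- otherwise both multiplicities are at least two
      exfalso
      apply hR
      right; left
      rcases Nat.lt_or_ge (μ z - 1) a with h3 | h3
      · exact ⟨μ z - 1, a, by omega, h3, by congr; omega⟩
      · refine ⟨a - 1, μ z, by omega, by omega, ?_⟩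
        rw [Multiset.pair_comm]; congr; omega
  · exfalso
    apply hR
    by_cases h1 : μ z = 1
    · obtain ⟨x, y, hxy⟩ := Multiset.card_eq_two.1 h
      rw [hxy] at hLpos ⊢
      right; right
      rcases le_total x y with h2 | h2
      · exact ⟨y, x, hLpos x (by simp), h2, by rw [h1, Multiset.pair_comm x]⟩
      · exact ⟨x, y, hLpos y (by simp), h2, by rw [h1]⟩
    · exact Or.inl ⟨μ z - 1, L, by omega, by omega, by congr; omega⟩
  · left
    constructor
    · by_contra h1
      exact hR (Or.inl ⟨μ z - 1, L, by omega, by omega, by congr; omega⟩)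
    · rw [hcard] at h
      obtain ⟨a, b, c, h1, h2, h3⟩ := Fintype.two_lt_card_iff.1 h
      exact ⟨a, b, c, a.2, b.2, c.2, Subtype.coe_ne_coe.2 h1, Subtype.coe_ne_coe.2 h2,
        Subtype.coe_ne_coe.2 h3⟩

variable {σ : TreeV μ ≃ TreeV μ'}

omit [Fintype J] [Fintype J'] in
theorem IsThick.core (hσ : ∀ x y, treeE f' μ' (σ x) (σ y) = treeE f μ x y) (h : IsThick f)
    (i : I) : ∃ j, σ (.inl i) = .inl j := by
  refine subset_core (G := multipartite f') (l := fun i => μ' i - 1)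
    (A := Set.range fun i => σ (.inl i)) ?_ ⟨i, rfl⟩
  rintro _ ⟨i, rfl⟩
  obtain ⟨j, k, hjk, hj, hk⟩ := h i
  refine ⟨_, ⟨j, rfl⟩, _, ⟨k, rfl⟩, ?_, ?_, ?_⟩
  · exact fun h => hjk (Sum.inl_injective (σ.injective h))
  · exact (hσ _ _).trans_ne ((treeE_inl_inl i j).2 hj)
  · exact (hσ _ _).trans_ne ((treeE_inl_inl i k).2 hk)

omit [Fintype J] [Fintype J'] in
theorem IsThick.not_star (hσ : ∀ x y, treeE f' μ' (σ x) (σ y) = treeE f μ x y) [Nonempty I]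
    (h : IsThick f) {z : I'} (hz : IsStar f' z) : False := by
  choose a ha using h.core hσ
  have hinj : a.Injective := fun i j hij => Sum.inl_injective (σ.injective (by rw [ha, ha, hij]))
  have hadj : ∀ i j, f i ≠ f j → f' (a i) ≠ f' (a j) := fun i j hij => by
    rw [← treeE_inl_inl (μ := μ'), ← ha, ← ha, hσ, treeE_inl_inl]
    exact hij
  obtain ⟨i, hi⟩ : ∃ i, a i ≠ z := by
    obtain ⟨i⟩ := ‹Nonempty I›
    by_cases hi : a i = z
    · obtain ⟨j, k, -, hj, -⟩ := h i
      exact ⟨j, fun h => hadj i j hj (by rw [hi, h])⟩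
    · exact ⟨i, hi⟩
  obtain ⟨j, k, hjk, hj, hk⟩ := h i
  exact hjk (hinj ((hz.eq_of_ne hi (hadj i j hj)).trans (hz.eq_of_ne hi (hadj i k hk)).symm))

omit [Fintype J] [Fintype J'] in
theorem IsStar.core (hσ : ∀ x y, treeE f' μ' (σ x) (σ y) = treeE f μ x y) {z : I} {z' : I'}
    (hz : IsStar f z) (hz' : IsStar f' z') (h1 : μ' z' = 1)
    (h3 : ∃ a b c, a ≠ z ∧ b ≠ z ∧ c ≠ z ∧ a ≠ b ∧ a ≠ c ∧ b ≠ c)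
    (i : I) : ∃ j, σ (.inl i) = .inl j := by
  have hc : σ (.inl z) = .inl z' := by
    by_contra hne
    exact hz'.not_branching hne ((hz.branching h3).map hσ)
  by_cases hi : i = z
  · exact ⟨z', by rw [hi, hc]⟩
  have hadj : treeE f' μ' (.inl z') (σ (.inl i)) ≠ 0 := by
    rw [← hc, hσ, treeE_inl_inl]
    exact hz.ne hi
  rcases hy : σ (.inl i) with j | ⟨j, t⟩
  · exact ⟨j, rfl⟩
  -- the centre has no leg
  · rw [hy, treeE_inl_inr] at hadj
    obtain ⟨rfl, -⟩ := hadj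
    have := t.2
    omega

theorem blocks_eq_of_iso (hf : f.Surjective) (hf' : f'.Surjective)
    (hJ : 2 ≤ Fintype.card J) (hJ' : 2 ≤ Fintype.card J')
    (hμ : ∀ i, 1 ≤ μ i) (hμ' : ∀ i, 1 ≤ μ' i)
    (hR : ¬ Redundant (blocks f μ)) (hR' : ¬ Redundant (blocks f' μ'))
    (h : (treeGraph f μ).Iso (treeGraph f' μ')) : blocks f μ = blocks f' μ' := by
  obtain ⟨σ, hσ⟩ := h
  change TreeV μ ≃ TreeV μ' at σ
  change ∀ x y, treeE f' μ' (σ x) (σ y) = treeE f μ x y at hσ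
  have hσ' : ∀ x y, treeE f μ (σ.symm x) (σ.symm y) = treeE f' μ' x y := fun x y => by
    rw [← hσ, σ.apply_symm_apply, σ.apply_symm_apply]
  have hI : Nonempty I := by
    have : Nonempty J := Fintype.card_pos_iff.1 (by omega)
    exact hf.nonempty
  have hI' : Nonempty I' := by
    have : Nonempty J' := Fintype.card_pos_iff.1 (by omega)
    exact hf'.nonempty
  rcases thick_or_star hf hJ with ht | ⟨z, hz, hk⟩ <;>
    rcases thick_or_star hf' hJ' with ht' | ⟨z', hz', hk'⟩
  · exact blocks_eq_of_core hf hf' hμ hμ' σ hσ (ht.core hσ) (ht'.core hσ')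
  · exact (ht.not_star hσ hz').elim
  · exact (ht'.not_star hσ' hz).elim
  · rcases hz.dichotomy hf hk hμ hR with ⟨h1, h3⟩ | ⟨hu, a, ha⟩ <;>
      rcases hz'.dichotomy hf' hk' hμ' hR' with ⟨h1', h3'⟩ | ⟨hu', a', ha'⟩
    · exact blocks_eq_of_core hf hf' hμ hμ' σ hσ (hz.core hσ hz' h1' h3)
        (hz'.core hσ' hz h1 h3')
    · exact (hz'.not_branching_of_unique hu' hk' _ ((hz.branching h3).map hσ)).elim
    · exact (hz.not_branching_of_unique hu hk _ ((hz'.branching h3').map hσ')).elim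
    -- two paths are distinguished by their number of vertices
    · have hn : ∑ i, μ i = ∑ i, μ' i := by
        rw [← card_treeGraph (f := f) hμ, ← card_treeGraph (f := f') hμ']
        exact Fintype.card_congr σ
      rw [← sum_blocks f μ, ← sum_blocks f' μ', ha, ha'] at hn
      rw [ha, ha']
      simp at hn
      rw [hn]

end Uniqueness

/-! ### Simple supernova graphs and slope two trees -/

section Supernova

theorem FChain.img_surjective {k m : ℕ} (c : FChain k m) (h : ℕ) :
    (c.img h).Surjective := by
  induction h with
  | zero => exact Function.surjective_id
  | succ h ih => exact (c.surj h).comp ih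

theorem FChain.img_eq_of_le {k m : ℕ} (c : FChain k m) {i j : Fin (c.size 0)} {h h' : ℕ}
    (hh : h ≤ h') (hij : c.img h i = c.img h j) : c.img h' i = c.img h' j := by
  induction hh with
  | refl => exact hij
  | step _ ih => exact congrArg (c.map _) ih

theorem FChain.graph_ne_zero {m : ℕ} (c : FChain 2 m) (i j : Fin (c.size 0)) :
    c.graph.e i j ≠ 0 ↔ c.map 0 i ≠ c.map 0 j := by
  change (if i = j then 0 else c.meet i j - 1) ≠ 0 ↔ _
  by_cases hij : i = j
  · simp [hij]
  rw [if_neg hij]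
  constructor
  · intro h heq
    have : c.meet i j ≤ 1 := Nat.find_min' (c.meet_ex i j) heq
    omega
  · intro h h0
    have hm : c.meet i j ≤ 1 := by omega
    exact h (c.img_eq_of_le (h' := 1) hm (Nat.find_spec (c.meet_ex i j)))

theorem FChain.graph_le {m : ℕ} (c : FChain 2 m) (i j : Fin (c.size 0)) :
    c.graph.e i j ≤ 1 := by
  change (if i = j then 0 else c.meet i j - 1) ≤ 1
  have : c.meet i j ≤ 2 := Nat.find_min' (c.meet_ex i j) <| by
    have : Subsingleton (Fin (c.size 2)) := by rw [c.size_add_two 0]; infer_instance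
    exact Subsingleton.elim _ _
  split_ifs <;> omega

/-- Two leaves lying on different branches at the top of a chain of slope exactly `k` are joined
by `k - 1` edges. -/
theorem FChain.exists_edge {k m : ℕ} (c : FChain k m) (hk : 2 ≤ k) (hc : c.ExactSlope) :
    ∃ i j, k - 1 ≤ c.graph.e i j := by
  have h2 : 2 ≤ c.size (k - 1) := hc.resolve_left (by omega)
  obtain ⟨i, hi⟩ := c.img_surjective (k - 1) ⟨0, by omega⟩
  obtain ⟨j, hj⟩ := c.img_surjective (k - 1) ⟨1, by omega⟩
  have hne : c.img (k - 1) i ≠ c.img (k - 1) j := by rw [hi, hj]; simp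
  refine ⟨i, j, ?_⟩
  have hij : i ≠ j := fun h => hne (by rw [h])
  change _ ≤ if i = j then 0 else c.meet i j - 1
  rw [if_neg hij]
  have : k - 1 < c.meet i j := by
    by_contra h
    have hm : c.meet i j ≤ k - 1 := by omega
    exact hne (c.img_eq_of_le hm (Nat.find_spec (c.meet_ex i j)))
  omega

theorem supernova_presents {G : MG} {n : ℕ} (hG : IsSupernova G) (hn : Fintype.card G.V = n)
    (hs : ∀ i j, G.e i j ≤ 1) : ∃ D ∈ types n, Presents G D := by
  obtain ⟨H, l, ⟨k, m, c, hk, hc, τ, hτ⟩, σ, hσ⟩ := hG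
  have hH : ∀ i j, c.graph.e i j ≤ 1 := by
    intro i j
    have h1 : H.e (τ.symm i) (τ.symm j) = c.graph.e i j := by
      rw [← hτ, τ.apply_symm_apply, τ.apply_symm_apply]
    have h2 : H.e (τ.symm i) (τ.symm j) =
        G.e (σ.symm (.inl (τ.symm i) : H.V ⊕ _)) (σ.symm (.inl (τ.symm j) : H.V ⊕ _)) := by
      rw [← hσ]
      erw [σ.apply_symm_apply, σ.apply_symm_apply]
      rfl
    rw [← h1, h2]
    exact hs _ _
  obtain rfl : k = 2 := by
    obtain ⟨i, j, hij⟩ := c.exists_edge hk hc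
    have := hH i j
    omega
  let μ : Fin (c.size 0) → ℕ := fun i => l (τ.symm i) + 1
  have hμ : ∀ i, 1 ≤ μ i := fun i => Nat.le_add_left 1 _
  have hiso : G.Iso (treeGraph (c.map 0) μ) := by
    refine MG.Iso.trans ⟨σ, hσ⟩ ?_
    refine snova_congr (G' := multipartite (c.map 0)) τ (fun i j => ?_) fun i => ?_
    · rw [← hτ]
      refine eq_of_le_one_of_ne_zero_iff (multipartite_le _ _ _) (c.graph_le _ _) ?_
      exact (multipartite_ne_zero _ _ _).trans (c.graph_ne_zero _ _).symm
    · change l (τ.symm (τ i)) + 1 - 1 = l i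
      rw [τ.symm_apply_apply, Nat.add_sub_cancel]
  refine ⟨blocks (c.map 0) μ, ⟨?_, fun B hB => mem_blocks_pos (c.surj 0) hμ hB, ?_⟩,
    (presents_iff _ _).2 hiso⟩
  · rw [card_blocks, Fintype.card_fin]
    exact hc.resolve_left (by norm_num)
  · rw [sum_blocks, ← hn, ← card_treeGraph (f := c.map 0) hμ]
    obtain ⟨ρ, -⟩ := hiso
    exact (Fintype.card_congr ρ).symm

/-- The simple supernova graph of a slope two tree. -/
noncomputable def FTree.graph {n : ℕ} (T : FTree 2 n) : MG := treeGraph (T.chain.map 0) T.mult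

theorem FTree.graph_prop {n : ℕ} (T : FTree 2 n) :
    IsSupernova T.graph ∧ Fintype.card T.graph.V = n ∧ ∀ i j, T.graph.e i j ≤ 1 := by
  refine ⟨⟨multipartite (T.chain.map 0), _, ⟨2, _, T.chain, le_rfl, T.exact, Equiv.refl _, ?_⟩,
    MG.Iso.refl _⟩, (card_treeGraph T.mult_pos).trans T.mult_sum, fun x y => treeE_le x y⟩
  intro i j
  refine eq_of_le_one_of_ne_zero_iff (T.chain.graph_le _ _) (multipartite_le _ _ _) ?_
  exact (T.chain.graph_ne_zero _ _).trans (multipartite_ne_zero _ _ _).symm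

theorem card_supernova (n : ℕ) :
    Nat.card (Quot (fun a b :
        {G : MG // IsSupernova G ∧ Fintype.card G.V = n ∧ ∀ i j, G.e i j ≤ 1} =>
      a.1.Iso b.1)) = (types n \ {D | Redundant D}).ncard := by
  rw [← Nat.card_coe_set_eq]
  choose t ht using fun D : types n => exists_tree D.2
  refine (Nat.card_congr (Equiv.ofBijective
    (fun D : (types n \ {D | Redundant D} : Set _) =>
      Quot.mk _ ⟨(t ⟨D.1, D.2.1⟩).graph, (t ⟨D.1, D.2.1⟩).graph_prop⟩) ⟨?_, ?_⟩)).symm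
  · rintro ⟨D, hD⟩ ⟨D', hD'⟩ h
    have hiso := (Equivalence.eqvGen_iff (r := fun a b :
      {G : MG // IsSupernova G ∧ Fintype.card G.V = n ∧ ∀ i j, G.e i j ≤ 1} => a.1.Iso b.1)
      ⟨fun a => MG.Iso.refl _, MG.Iso.symm, MG.Iso.trans⟩).1 (Quot.eqvGen_exact h)
    have h1 := ht ⟨D, hD.1⟩
    have h2 := ht ⟨D', hD'.1⟩
    generalize t ⟨D, hD.1⟩ = T at hiso h1
    generalize t ⟨D', hD'.1⟩ = T' at hiso h2
    refine Subtype.ext (h1.symm.trans (Eq.trans ?_ h2))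
    refine blocks_eq_of_iso (T.chain.surj 0) (T'.chain.surj 0) ?_ ?_ T.mult_pos T'.mult_pos
      ?_ ?_ hiso
    · rw [Fintype.card_fin]; exact T.exact.resolve_left (by norm_num)
    · rw [Fintype.card_fin]; exact T'.exact.resolve_left (by norm_num)
    · change ¬ Redundant T.type
      rw [h1]; exact hD.2
    · change ¬ Redundant T'.type
      rw [h2]; exact hD'.2
  · rintro ⟨G, hG⟩
    obtain ⟨D, hD, hp⟩ := supernova_presents hG.1 hG.2.1 hG.2.2
    obtain ⟨D', hD', hR, hp'⟩ := exists_nonredundant hD hp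
    refine ⟨⟨D', hD', hR⟩, Quot.sound ?_⟩
    refine MG.Iso.symm ((presents_iff _ _).1 ?_)
    have := ht ⟨D', hD'⟩
    change Presents G (t ⟨D', hD'⟩).type
    rw [this]
    exact hp'

end Supernova

/-! ### Counting the redundant types -/

section Counting

/-- The redundant type of rank `n` attached to a multiset `L` of positive numbers: with
`c = n - 1 - ∑ L`, either the star with centre of multiplicity `c + 1` and arms `L`, or, when `L`
is a single number `≤ c`, the star with centre of multiplicity one and arms `c, L`. -/
def redundantType (n : ℕ) (L : Multiset ℕ) : Multiset (Multiset ℕ) :=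
  if 2 ≤ L.card ∨ n - 1 - L.sum < L.sum then {{n - 1 - L.sum + 1}, L}
  else {{1}, (n - 1 - L.sum) ::ₘ L}

variable {n : ℕ} {L L' : Multiset ℕ}

theorem redundantType_spec (hL : L ≠ 0) :
    (redundantType n L = {{n - 1 - L.sum + 1}, L} ∧ (2 ≤ L.card ∨ n - 1 - L.sum < L.sum)) ∨
    ∃ a, L = {a} ∧ a ≤ n - 1 - a ∧ redundantType n L = {{1}, {n - 1 - a, a}} := by
  unfold redundantType
  split_ifs with h
  · exact Or.inl ⟨rfl, h⟩
  · right
    push Not at h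
    have := Multiset.card_pos.2 hL
    obtain ⟨a, rfl⟩ := Multiset.card_eq_one.1 (show L.card = 1 by omega)
    simp only [Multiset.sum_singleton] at h ⊢
    exact ⟨a, rfl, h.2, rfl⟩

theorem redundantType_injective (hL : L ≠ 0) (hL' : L' ≠ 0) (hs : L.sum + 2 ≤ n)
    (hs' : L'.sum + 2 ≤ n) (h : redundantType n L = redundantType n L') : L = L' := by
  rcases redundantType_spec (n := n) hL with ⟨h1, h2⟩ | ⟨a, rfl, h2, h1⟩ <;>
    rcases redundantType_spec (n := n) hL' with ⟨h1', h2'⟩ | ⟨a', rfl, h2', h1'⟩ <;>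
    rw [h1, h1'] at h
  · rcases pair_eq h with ⟨-, h⟩ | ⟨h3, h4⟩
    · exact h
    · have s3 := congrArg Multiset.sum h3
      have s4 := congrArg Multiset.sum h4
      have c3 := congrArg Multiset.card h3
      have c4 := congrArg Multiset.card h4
      simp only [Multiset.sum_singleton, Multiset.card_singleton] at s3 s4 c3 c4
      refine h4.trans (Eq.trans ?_ h3)
      rw [Multiset.singleton_inj]
      omega
  · rcases pair_eq h with ⟨h, -⟩ | ⟨h, -⟩
    · have := Multiset.singleton_inj.1 h; omega
    · have := congrArg Multiset.card h; simp at this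
  · rcases pair_eq h with ⟨h, -⟩ | ⟨-, h⟩
    · have := Multiset.singleton_inj.1 h; omega
    · have := congrArg Multiset.card h; simp at this
  · rcases pair_eq h with ⟨-, h⟩ | ⟨h, -⟩
    · rcases pair_eq h with ⟨-, h⟩ | ⟨h3, h4⟩
      · rw [h]
      · simp; omega
    · have := congrArg Multiset.card h; simp at this

theorem redundantType_mem (hL : L ≠ 0) (hpos : ∀ x ∈ L, 1 ≤ x) (hs : L.sum + 2 ≤ n) :
    redundantType n L ∈ types n ∧ Redundant (redundantType n L) := by
  rcases redundantType_spec (n := n) hL with ⟨h1, h2⟩ | ⟨a, rfl, h2, h1⟩ <;> rw [h1]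
  · refine ⟨⟨by simp, ?_, ?_⟩, ?_⟩
    · intro B hB
      simp only [Multiset.insert_eq_cons, Multiset.mem_cons, Multiset.mem_singleton] at hB
      rcases hB with rfl | rfl
      · simp
      · exact ⟨hL, hpos⟩
    · simp; omega
    · by_cases h3 : 2 ≤ L.card
      · exact Or.inl ⟨_, L, by omega, h3, rfl⟩
      · have := Multiset.card_pos.2 hL
        obtain ⟨a, rfl⟩ := Multiset.card_eq_one.1 (show L.card = 1 by omega)
        right; left
        rw [Multiset.sum_singleton] at h2 hs ⊢
        rw [Multiset.card_singleton] at h2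
        exact ⟨n - 1 - a, a, by omega, by omega, rfl⟩
  · have ha := hpos a (by simp)
    simp at hs
    refine ⟨⟨by simp, ?_, ?_⟩, Or.inr (Or.inr ⟨_, a, ha, h2, rfl⟩)⟩
    · simp; omega
    · simp; omega

theorem exists_redundantType {D : Multiset (Multiset ℕ)} (hD : D ∈ types n) (hR : Redundant D) :
    ∃ L : Multiset ℕ, (∀ x ∈ L, 1 ≤ x) ∧ 1 ≤ L.sum ∧ L.sum + 2 ≤ n ∧ redundantType n L = D := by
  obtain ⟨-, hB, hn⟩ := hD
  rcases hR with ⟨c, L, hc, hL, rfl⟩ | ⟨c, a, hc, hca, rfl⟩ | ⟨c, a, ha, hac, rfl⟩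
  · have hpos : ∀ x ∈ L, 1 ≤ x := (hB L (by simp)).2
    have := Multiset.card_nsmul_le_sum (a := 1) hpos
    simp at hn this
    refine ⟨L, hpos, by omega, by omega, ?_⟩
    rw [redundantType, if_pos (Or.inl hL)]
    congr
    omega
  · simp at hn
    refine ⟨{a}, by simp; omega, by simp; omega, by simp; omega, ?_⟩
    rw [redundantType, if_pos (Or.inr (by simp; omega))]
    congr
    simp; omega
  · simp at hn
    refine ⟨{a}, by simpa, by simpa, by simp; omega, ?_⟩
    rw [redundantType, if_neg (by simp; omega)]
    congr
    simp; omega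

theorem card_redundant (n : ℕ) : (types n ∩ {D | Redundant D}).ncard =
    ∑ i ∈ Finset.range (n - 2), Fintype.card (Nat.Partition (i + 1)) := by
  have hne : ∀ {s : ℕ} (P : Nat.Partition (s + 1)), P.parts ≠ 0 := fun P h => by
    have := P.parts_sum
    rw [h] at this
    simp at this
  rw [← Nat.card_coe_set_eq, ← Fin.sum_univ_eq_sum_range
    (fun i => Fintype.card (Nat.Partition (i + 1))), ← Fintype.card_sigma,
    ← Nat.card_eq_fintype_card]
  refine (Nat.card_congr (Equiv.ofBijective
    (fun p : Σ i : Fin (n - 2), Nat.Partition (i.val + 1) =>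
      (⟨redundantType n p.2.parts, redundantType_mem (hne p.2) (fun x hx => p.2.parts_pos hx)
        (by rw [p.2.parts_sum]; have := p.1.2; omega)⟩ :
        (types n ∩ {D | Redundant D} : Set _))) ⟨?_, ?_⟩)).symm
  · rintro ⟨⟨i, hi⟩, P⟩ ⟨⟨j, hj⟩, Q⟩ h
    have h1 := redundantType_injective (hne P) (hne Q) (by rw [P.parts_sum]; simp only; omega)
      (by rw [Q.parts_sum]; simp only; omega) (congrArg Subtype.val h)
    have hij : i + 1 = j + 1 := by
      have hP := P.parts_sum
      have hQ := Q.parts_sum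
      simp only at hP hQ
      rw [← hP, ← hQ, h1]
    obtain rfl : i = j := by omega
    rw [Nat.Partition.ext h1]
  · rintro ⟨D, hD, hR⟩
    obtain ⟨L, hpos, h1, h2, rfl⟩ := exists_redundantType hD hR
    exact ⟨⟨⟨L.sum - 1, by omega⟩, ⟨L, fun {x} hx => hpos x hx, by simp only; omega⟩⟩, rfl⟩

end Counting

/-- For n ≥ 2, the number of isomorphism classes of simple supernova graphs with
n vertices (supernova graphs all of whose edge multiplicities are at most 1)
equals ψ(2,n) + 1 − θ(n−2), where θ(k) = Σ_{i=0}^{k} p(i). -/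
theorem count_simple_supernova (n : ℕ) (hn : 2 ≤ n) :
    Nat.card (Quot (fun a b :
        {G : MG // IsSupernova G ∧ Fintype.card G.V = n ∧ ∀ i j, G.e i j ≤ 1} =>
      a.1.Iso b.1)) =
    psi 2 n + 1 - ∑ i ∈ Finset.range (n - 2 + 1), Fintype.card (Nat.Partition i) := by
  have h0 : Fintype.card (Nat.Partition 0) = 1 := Fintype.card_unique
  have h1 := Set.ncard_inter_add_ncard_sdiff_eq_ncard (types n) {D | Redundant D} (types_finite n)
  rw [card_supernova, psi_eq_ncard, Finset.sum_range_succ', h0, ← card_redundant]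
  omega
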